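/- arXiv:2307.01912 — 2 statements merged into one kernel-verified Lean document; each statement's English description precedes it below -/
import Mathlib

section
/- Let n, m be natural numbers and let x be an integer with x + m ≥ 0. Then the determinant of the n×n rational matrix T_{n,m}(x) whose (i,j)-entry (for 0 ≤ i, j ≤ n-1) is C(x+m, j-i+m) − C(x+m, m-i-j-1) equals the determinant of the n×n rational matrix B_{n,m}(x) whose (i,j)-entry (for 0 ≤ i, j ≤ n-1) is C(x+m+2i, i-j+m) − C(x+m+2i, i-j+m-1). -/
/-- `C N k` : the binomial coefficient `C(N,k)` for `N : ℕ` and `k : ℤ`,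
with the convention that it is `0` when `k < 0` or `k > N`, as a rational. -/
def C (N : ℕ) (k : ℤ) : ℚ := if 0 ≤ k then (N.choose k.toNat : ℚ) else 0

/-!
Write `T` and `B` for the two matrices. Then `B = L * Tᵀ`, where the lower unitriangular matrix `L`
is `B` for `x = m = 0`. Indeed, Vandermonde's identity expands the `(i, j)` entry of `B` as
`∑ k, (C(2i, i - k) - C(2i, i - k - 1)) * C(x + m, m - j + k)` over all integers `k`. The first
factor is antisymmetric under `k ↦ -1 - k`, so folding the sum onto `k ≥ 0` produces the entries
of `T`.
-/

open Finset Matrix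

theorem sum_Ico_neg_eq_sum_range {M : Type*} [AddCommMonoid M] (f : ℤ → M) (n : ℕ) :
    ∑ k ∈ Ico (-n : ℤ) n, f k = ∑ k ∈ range n, (f k + f (-1 - k)) := by
  induction n with
  | zero => simp
  | succ n ih =>
    have hdisj : Disjoint (Ico (-n : ℤ) n) {(-(n + 1) : ℤ), (n : ℤ)} := by simp
    rw [sum_range_succ, ← ih, Nat.cast_succ, Ico_succ_succ, sum_union hdisj,
      sum_pair (by lia), add_comm (f _), show -1 - (n : ℤ) = -(n + 1) by ring]

theorem sum_Ico_neg_mul_of_antisymm {R : Type*} [NonUnitalNonAssocRing R] {a : ℤ → R}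
    (ha : ∀ k, a (-1 - k) = -a k) (f : ℤ → R) (n : ℕ) :
    ∑ k ∈ Ico (-n : ℤ) n, a k * f k = ∑ k ∈ range n, a k * (f k - f (-1 - k)) := by
  rw [sum_Ico_neg_eq_sum_range]
  simp only [ha, neg_mul, mul_sub, ← sub_eq_add_neg]

theorem C_natCast (N k : ℕ) : C N k = N.choose k := by
  simp [C]

theorem C_of_neg (N : ℕ) {k : ℤ} (hk : k < 0) : C N k = 0 :=
  if_neg hk.not_ge

theorem C_zero_left (k : ℤ) : C 0 k = if k = 0 then 1 else 0 := by
  rcases lt_or_ge k 0 with hk | hk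
  · rw [C_of_neg 0 hk, if_neg hk.ne]
  · lift k to ℕ using hk
    rw [C_natCast]
    cases k <;> simp [Nat.cast_add_one_ne_zero]

theorem C_zero_right (N : ℕ) : C N 0 = 1 := by
  simp [C]

theorem C_succ (N : ℕ) (k : ℤ) : C (N + 1) k = C N k + C N (k - 1) := by
  rcases lt_trichotomy k 0 with hk | rfl | hk
  · rw [C_of_neg _ hk, C_of_neg _ hk, C_of_neg N (by lia), add_zero]
  · rw [C_zero_right, C_zero_right, C_of_neg N (by lia), add_zero]
  · obtain ⟨l, rfl⟩ : ∃ l : ℕ, k = l + 1 := ⟨(k - 1).toNat, by lia⟩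
    rw [add_sub_cancel_right, ← Nat.cast_succ, C_natCast, C_natCast, C_natCast,
      Nat.choose_succ_succ, add_comm, Nat.cast_add]

theorem C_symm (N : ℕ) (k : ℤ) : C N (N - k) = C N k := by
  induction N generalizing k with
  | zero => simp [C_zero_left]
  | succ N ih =>
    rw [C_succ, C_succ, ← ih k, ← ih (k - 1), add_comm]
    congr 2 <;> push_cast <;> ring

theorem C_add_eq_sum (M N : ℕ) (p c : ℤ) {s : Finset ℤ} (hs : Icc (c - M) c ⊆ s) :
    C (M + N) (p + c) = ∑ k ∈ s, C M (c - k) * C N (p + k) := by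
  induction M generalizing c with
  | zero =>
    have hc : c ∈ s := hs (by simp)
    simp [C_zero_left, sub_eq_zero, hc]
  | succ M ih =>
    have hc : Icc (c - M) c ⊆ s := (Icc_subset_Icc_left (by lia)).trans hs
    have hc' : Icc (c - 1 - M) (c - 1) ⊆ s := (Icc_subset_Icc (by lia) (by lia)).trans hs
    rw [Nat.add_right_comm, C_succ, add_sub_assoc, ih c hc, ih (c - 1) hc', ← sum_add_distrib]
    simp only [C_succ M, add_mul, sub_right_comm]

/-- The ballot number, in the normalization `C(N,k) - C(N,k-1)`. For `0 ≤ 2 * k ≤ N` it counts the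
words with `k` letters `b` and `N - k` letters `a` in which every prefix has at least as many `a`s
as `b`s. -/
def ballot (N : ℕ) (k : ℤ) : ℚ := C N k - C N (k - 1)

theorem ballot_of_neg (N : ℕ) {k : ℤ} (hk : k < 0) : ballot N k = 0 := by
  rw [ballot, C_of_neg N hk, C_of_neg N (by lia), sub_zero]

theorem ballot_zero_right (N : ℕ) : ballot N 0 = 1 := by
  rw [ballot, C_zero_right, C_of_neg N (by lia), sub_zero]

theorem ballot_reflect (N : ℕ) (k : ℤ) : ballot N (N + 1 - k) = -ballot N k := by
  rw [ballot, ballot, ← C_symm N k, ← C_symm N (k - 1), neg_sub]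
  congr 2 <;> ring

theorem ballot_add_eq_sum (M N : ℕ) (p c : ℤ) {s : Finset ℤ} (hs : Icc (c - M - 1) c ⊆ s) :
    ballot (M + N) (p + c) = ∑ k ∈ s, ballot M (c - k) * C N (p + k) := by
  have hc : Icc (c - M) c ⊆ s := (Icc_subset_Icc_left (by lia)).trans hs
  have hc' : Icc (c - 1 - M) (c - 1) ⊆ s := (Icc_subset_Icc (by lia) (by lia)).trans hs
  rw [ballot, add_sub_assoc, C_add_eq_sum M N p c hc, C_add_eq_sum M N p (c - 1) hc',
    ← sum_sub_distrib]
  simp only [ballot, sub_mul, sub_right_comm]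

theorem ballot_two_mul_add_eq_sum {i n : ℕ} (hi : i < n) (N : ℕ) (p : ℤ) :
    ballot (2 * i + N) (p + i) =
      ∑ k ∈ range n, ballot (2 * i) (i - k) * (C N (p + k) - C N (p - k - 1)) := by
  have hs : Icc ((i : ℤ) - (2 * i : ℕ) - 1) i ⊆ Ico (-n : ℤ) n := fun k hk => by
    rw [mem_Icc] at hk
    rw [mem_Ico]
    lia
  have antisymm (k : ℤ) : ballot (2 * i) (i - (-1 - k)) = -ballot (2 * i) (i - k) := by
    rw [← ballot_reflect]
    congr 1
    push_cast
    ring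
  rw [ballot_add_eq_sum _ N p i hs, sum_Ico_neg_mul_of_antisymm antisymm fun k => C N (p + k)]
  refine sum_congr rfl fun k _ => ?_
  rw [show p + (-1 - (k : ℤ)) = p - k - 1 by ring]

/-- The matrix `B_{n,0}(0)` of ballot numbers, which multiplies `T_{n,m}(x)ᵀ` into `B_{n,m}(x)` for
all `m` and `x`. -/
def ballotMatrix (n : ℕ) : Matrix (Fin n) (Fin n) ℚ :=
  of fun i k => ballot (2 * i) ((i : ℤ) - k)

theorem det_ballotMatrix (n : ℕ) : (ballotMatrix n).det = 1 := by
  have lower : (ballotMatrix n).IsLowerTriangular := fun i j (hij : i < j) =>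
    ballot_of_neg _ (sub_neg.mpr (by exact_mod_cast hij))
  have diag (i : Fin n) : ballotMatrix n i i = 1 := by
    rw [ballotMatrix, of_apply, sub_self, ballot_zero_right]
  rw [det_of_isLowerTriangular _ lower, prod_eq_one fun i _ => diag i]

theorem ballotMatrix_mul_transpose (n N : ℕ) (m : ℤ) :
    ballotMatrix n * (of fun i j : Fin n => C N ((j : ℤ) - i + m) - C N (m - i - j - 1))ᵀ =
      of fun i j : Fin n => ballot (N + 2 * i) ((i : ℤ) - j + m) := by
  ext i j
  rw [of_apply, show (i : ℤ) - j + m = m - j + (i : ℕ) by ring, add_comm N,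
    ballot_two_mul_add_eq_sum i.isLt, ← Fin.sum_univ_eq_sum_range fun k : ℕ =>
      ballot (2 * i) ((i : ℤ) - k) * (C N (m - j + k) - C N (m - j - k - 1))]
  simp only [mul_apply, transpose_apply, of_apply, ballotMatrix]
  refine sum_congr rfl fun k _ => ?_
  rw [show (k : ℤ) - j + m = m - j + k by ring]

theorem det_T_eq_det_B (n m : ℕ) (x : ℤ) (hx : 0 ≤ x + m) :
    Matrix.det (Matrix.of fun i j : Fin n =>
      C (x + m).toNat ((j : ℤ) - (i : ℤ) + m) -
      C (x + m).toNat ((m : ℤ) - (i : ℤ) - (j : ℤ) - 1)) =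
    Matrix.det (Matrix.of fun i j : Fin n =>
      C (x + m + 2 * (i : ℕ)).toNat ((i : ℤ) - (j : ℤ) + m) -
      C (x + m + 2 * (i : ℕ)).toNat ((i : ℤ) - (j : ℤ) + m - 1)) := by
  have toNat_add (i : ℕ) : (x + m + 2 * i).toNat = (x + m).toNat + 2 * i := by lia
  have det_eq := congrArg det (ballotMatrix_mul_transpose n (x + m).toNat m)
  rw [det_mul, det_ballotMatrix, one_mul, det_transpose] at det_eq
  simpa only [toNat_add, ballot] using det_eq
end

section
/- For natural numbers i, j define the super Catalan number S_{i,j} = (2i)!·(2j)! / (2·i!·j!·(i+j)!) as an element of ℚ. Let a, b, n be natural numbers. Then the determinant of the n×n rational matrix whose (i,j)-entry (for 1 ≤ i, j ≤ n) is S_{i+a, j+b} equals ((−1)^{n(n−1)/2} / (2^n · n!)) · ∏_{i=1}^{n} ((2a+2i)!·(2b+2i)!·i!) / ((a+i)!·(b+i)!·(a+b+n+i)!). -/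
/-- The super Catalan numbers `S i j = (2i)!(2j)! / (2 i! j! (i+j)!)` as rationals. -/
def S (i j : ℕ) : ℚ :=
  ((2 * i).factorial * (2 * j).factorial : ℚ) /
    (2 * i.factorial * j.factorial * (i + j).factorial)

/-!
Up to a factor depending on the row and a factor depending on the column, `S i j` is `1 / (i + j)!`.
In `1 / (x + j)! = (x + n - 1) (x + n - 2) ⋯ (x + j + 1) / (x + n - 1)!` the numerator is a monic
polynomial in `x` of degree `n - 1 - j`. Hence the determinant of the `1 / (x i + j)!` is a
Vandermonde determinant with its columns reversed, and the reversal contributes the sign.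
-/

open Finset Matrix
open scoped Nat

theorem prod_Icc_one_eq_prod_range {M : Type*} [CommMonoid M] (f : ℕ → M) (n : ℕ) :
    ∏ i ∈ Icc 1 n, f i = ∏ i ∈ range n, f (i + 1) := by
  rw [range_eq_Ico, prod_Ico_add' f 0 n 1]
  rfl

theorem prod_range_succ_factorial (R : Type*) [CommSemiring R] (n : ℕ) :
    ∏ i ∈ range n, ((i + 1)! : R) = n ! * ∏ i ∈ range n, (i ! : R) := by
  rw [mul_comm, ← prod_range_succ, prod_range_succ']
  simp

theorem sign_revPerm (n : ℕ) :
    Equiv.Perm.sign (Fin.revPerm : Equiv.Perm (Fin n)) = (-1) ^ (n * (n - 1) / 2) := by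
  have inversions (j : Fin n) :
      ∏ i ∈ Iio j, (if Fin.revPerm i < Fin.revPerm j then (1 : ℤˣ) else -1) = (-1) ^ (j : ℕ) := by
    rw [prod_congr rfl fun i hi ↦ if_neg (by simpa using (mem_Iio.mp hi).le)]
    simp
  rw [Equiv.Perm.sign_eq_prod_prod_Iio, prod_congr rfl fun j _ ↦ inversions j,
    prod_pow_eq_pow_sum, Fin.sum_univ_eq_sum_range (fun i ↦ i), sum_range_id]

section Vandermonde

variable {R : Type*} [CommRing R] {n : ℕ}

theorem det_eval_descPochhammer (v : Fin n → R) :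
    (of fun i j : Fin n ↦ (descPochhammer R j).eval (v i)).det = (vandermonde v).det := by
  nontriviality R
  have monic (k : ℕ) : (descPochhammer R k).Monic := by
    rw [← descPochhammer_map (Int.castRingHom R)]
    exact (monic_descPochhammer ℤ k).map _
  have natDegree (k : ℕ) : (descPochhammer R k).natDegree = k := by
    rw [← descPochhammer_map (Int.castRingHom R), (monic_descPochhammer ℤ k).natDegree_map,
      descPochhammer_natDegree]
  exact (det_eval_matrixOfPolynomials_eq_det_vandermonde v (fun j ↦ descPochhammer R j)
    (fun j ↦ natDegree j) fun j ↦ monic j).symm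

variable (R n) in
theorem det_vandermonde_natCast :
    (vandermonde fun i : Fin n ↦ (i : R)).det = ∏ i ∈ range n, (i ! : R) := by
  cases n with
  | zero => simp
  | succ n =>
    rw [det_vandermonde_id_eq_superFactorial, ← Nat.prod_range_factorial_succ, prod_range_succ']
    push_cast
    simp

end Vandermonde

section InvFactorial

variable {K : Type*} [Field K] [CharZero K] {n : ℕ}

theorem inv_factorial_add_eq_mul_descFactorial (x : ℕ) {j m : ℕ} (hj : j ≤ m) :
    ((x + j)! : K)⁻¹ = ((x + m)! : K)⁻¹ * (x + m).descFactorial (m - j) := by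
  have factor : (x + j)! * (x + m).descFactorial (m - j) = (x + m)! := by
    rw [← Nat.factorial_mul_descFactorial (show m - j ≤ x + m by lia),
      show x + m - (m - j) = x + j by lia]
  have hxj : ((x + j)! : K) ≠ 0 := by simp [Nat.factorial_ne_zero]
  have hxm : ((x + m)! : K) ≠ 0 := by simp [Nat.factorial_ne_zero]
  rw [eq_inv_mul_iff_mul_eq₀ hxm, ← factor]
  push_cast
  field_simp

theorem det_inv_factorial_add (x : Fin n → ℕ) :
    (of fun i j : Fin n ↦ ((x i + j)! : K)⁻¹).det =
      (-1) ^ (n * (n - 1) / 2) * (∏ i, ((x i + (n - 1))! : K)⁻¹) *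
        (vandermonde fun i ↦ (x i : K)).det := by
  let P : Matrix (Fin n) (Fin n) K :=
    of fun i j ↦ (descPochhammer K j).eval ((x i : K) + (n - 1 : ℕ))
  have entry (i j : Fin n) : ((x i + j)! : K)⁻¹ =
      ((x i + (n - 1))! : K)⁻¹ * P.submatrix id Fin.revPerm i j := by
    rw [inv_factorial_add_eq_mul_descFactorial (x i) (Nat.le_sub_one_of_lt j.isLt),
      ← descPochhammer_eval_eq_descFactorial]
    simp [P, Fin.val_rev, Nat.sub_sub, add_comm]
  have det_P : P.det = (vandermonde fun i ↦ (x i : K)).det := by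
    rw [det_eval_descPochhammer, det_vandermonde_add]
  simp_rw [entry]
  rw [det_mul_column, det_permute', sign_revPerm, det_P]
  push_cast
  ring

variable (K n) in
theorem det_hankel_inv_factorial (c : ℕ) :
    (of fun i j : Fin n ↦ ((c + i + j)! : K)⁻¹).det =
      (-1) ^ (n * (n - 1) / 2) * ∏ i ∈ range n, (i ! / (c + i + (n - 1))! : K) := by
  have translate : (vandermonde fun i : Fin n ↦ ((c + i : ℕ) : K)).det =
      ∏ i ∈ range n, (i ! : K) := by
    simp_rw [Nat.cast_add, add_comm (c : K)]
    rw [det_vandermonde_add, det_vandermonde_natCast]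
  rw [det_inv_factorial_add fun i : Fin n ↦ c + i, translate,
    Fin.prod_univ_eq_prod_range fun i ↦ ((c + i + (n - 1))! : K)⁻¹, mul_assoc, ← prod_mul_distrib]
  simp_rw [inv_mul_eq_div]

end InvFactorial

theorem S_eq_mul_inv_factorial (i j : ℕ) :
    S i j = (2 * i)! / (2 * i !) * ((2 * j)! / j ! * ((i + j)! : ℚ)⁻¹) := by
  rw [S]
  ring

theorem det_S {ι : Type*} [Fintype ι] [DecidableEq ι] (x y : ι → ℕ) :
    (of fun i j ↦ S (x i) (y j)).det =
      (∏ i, ((2 * x i)! / (2 * (x i)!) : ℚ)) * (∏ j, ((2 * y j)! / (y j)! : ℚ)) *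
        (of fun i j ↦ ((x i + y j)! : ℚ)⁻¹).det := by
  simp_rw [S_eq_mul_inv_factorial]
  rw [mul_assoc, ← det_mul_row, ← det_mul_column]
  rfl

theorem det_superCatalan (a b n : ℕ) :
    Matrix.det (Matrix.of fun i j : Fin n =>
      S ((i : ℕ) + 1 + a) ((j : ℕ) + 1 + b)) =
    ((-1 : ℚ) ^ (n * (n - 1) / 2) / (2 ^ n * n.factorial)) *
      ∏ i ∈ Finset.Icc 1 n,
        (((2 * a + 2 * i).factorial * (2 * b + 2 * i).factorial * i.factorial : ℚ)) /
        (((a + i).factorial * (b + i).factorial * (a + b + n + i).factorial : ℚ)) := by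
  have hankel : (of fun i j : Fin n ↦ ((a + (i + 1) + (b + (j + 1)))! : ℚ)⁻¹).det =
      (-1) ^ (n * (n - 1) / 2) * ∏ i ∈ range n, (i ! / (a + b + n + (i + 1))! : ℚ) := by
    have index (i j : ℕ) : a + (i + 1) + (b + (j + 1)) = a + b + 2 + i + j := by ring
    simp_rw [index, det_hankel_inv_factorial]
    refine congrArg _ (prod_congr rfl fun i hi ↦ ?_)
    have i_lt_n : i < n := mem_range.mp hi
    rw [show a + b + 2 + i + (n - 1) = a + b + n + (i + 1) by lia]
  simp_rw [add_comm (_ + 1) a, add_comm (_ + 1) b]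
  rw [det_S, hankel, prod_Icc_one_eq_prod_range,
    Fin.prod_univ_eq_prod_range fun i ↦ ((2 * (a + (i + 1)))! / (2 * (a + (i + 1))!) : ℚ),
    Fin.prod_univ_eq_prod_range fun j ↦ ((2 * (b + (j + 1)))! / (b + (j + 1))! : ℚ)]
  simp only [prod_div_distrib, prod_mul_distrib, prod_range_succ_factorial, prod_const, card_range,
    ← mul_add]
  field_simp
end
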